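/- arXiv:2502.13112 — 2 statements merged into one kernel-verified Lean document; each statement's English description precedes it below -/
import Mathlib

section
/- Under (A1)–(A4), suppose T ≥ 1, x_1 ∈ RB, and the algorithm is run with parameters η = 2R/(G_f·√T) and ρ = 0. Then: (i) for every point x* with g(x*) ≤ 0, ∑_{t=1}^T (f_t(x_t) − f_t(x*)) ≤ 2·R·G_f·√T; and (ii) for all t ∈ {1,…,T}, g(x_t) ≤ 2·R·G_g·exp(−σ²·(t−1)/(2·G_g²)) + 2·R·G_g/(ξ·√T). -/
open scoped RealInnerProductSpace Classical

noncomputable def projBall {d : ℕ} (R : ℝ) (v : EuclideanSpace ℝ (Fin d)) :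
    EuclideanSpace ℝ (Fin d) := (R / max R ‖v‖) • v

def IsSubgradAt {d : ℕ} (g : EuclideanSpace ℝ (Fin d) → ℝ)
    (x s : EuclideanSpace ℝ (Fin d)) : Prop :=
  ∀ y, g x + ⟪s, y - x⟫ ≤ g y

/-!
A Polyak step projects onto the half-space where the linearization of `g` is nonpositive. That
half-space contains the feasible set `X`, so each iteration brings the iterate at least as close to
every feasible point as the plain gradient step does, and the regret bound is the telescoping
argument for online gradient descent.

The lower bound on the subgradients at level `-ε` gives the error bound `σ * dist(x, X) ≤ g x`
outside `X`. Pythagoras then makes the half-space projection contract the distance to `X` by the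
factor `√(1 - σ² / Gg²)`, while the gradient step increases it by at most `η * Gf`; the resulting
affine recursion bounds the distance to `X`, and `g` is at most `Gg` times this distance.
-/

section ConvexFunctions

theorem exists_strongDual_between {E : Type*} [TopologicalSpace E] [AddCommGroup E] [Module ℝ E]
    [IsTopologicalAddGroup E] [ContinuousSMul ℝ E] {f h : E → ℝ} (hf : ConvexOn ℝ Set.univ f)
    (hf_cont : Continuous f) (hh : ConcaveOn ℝ Set.univ h) (hhf : ∀ z, h z ≤ f z) :
    ∃ (φ : StrongDual ℝ E) (b : ℝ), ∀ z, h z ≤ φ z + b ∧ φ z + b ≤ f z := by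
  have epi_convex : Convex ℝ {q : E × ℝ | f q.1 < q.2} := by
    simpa using hf.convex_strict_epigraph
  have epi_open : IsOpen {q : E × ℝ | f q.1 < q.2} :=
    isOpen_lt (hf_cont.comp continuous_fst) continuous_snd
  have hyp_convex : Convex ℝ {q : E × ℝ | q.2 ≤ h q.1} := by
    simpa using hh.convex_hypograph
  have disj : Disjoint {q : E × ℝ | f q.1 < q.2} {q : E × ℝ | q.2 ≤ h q.1} :=
    Set.disjoint_left.2 fun q hfq hqh => (hfq.trans_le hqh).not_ge (hhf q.1)
  obtain ⟨Φ, u, Φ_lt, le_Φ⟩ := geometric_hahn_banach_open epi_convex epi_open hyp_convex disj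
  set ℓ : StrongDual ℝ E := Φ.comp (ContinuousLinearMap.inl ℝ E ℝ)
  set β : ℝ := Φ (0, 1)
  have Φ_apply (z : E) (r : ℝ) : Φ (z, r) = ℓ z + r * β := by
    rw [← smul_eq_mul, ← map_smul, ContinuousLinearMap.comp_apply, ← map_add]
    simp
  have β_neg : β < 0 := by
    have lt := Φ_lt (0, f 0 + 1) (lt_add_one (f 0))
    have le := le_Φ (0, h 0) (le_refl (h 0))
    rw [Φ_apply] at lt le
    nlinarith [hhf 0]
  -- The graph of the affine function is the separating hyperplane `Φ (z, r) = u`.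
  refine ⟨-β⁻¹ • ℓ, β⁻¹ * u, fun z => ?_⟩
  have Φ_graph : ℓ z + ((-β⁻¹ • ℓ) z + β⁻¹ * u) * β = u := by
    simp only [smul_apply, smul_eq_mul]
    field_simp [β_neg.ne]
    ring
  constructor
  · have le := le_Φ (z, h z) (le_refl (h z))
    rw [Φ_apply] at le
    exact (mul_le_mul_right_of_neg β_neg).1 (by linarith)
  · by_contra! f_lt
    have lt := Φ_lt (z, _) f_lt
    rw [Φ_apply, Φ_graph] at lt
    exact lt.false

theorem exists_dist_eq_infDist_sublevel {α : Type*} [PseudoMetricSpace α] [ProperSpace α]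
    {g : α → ℝ} (hg : Continuous g) {r : ℝ} (hne : {z | g z ≤ r}.Nonempty) (x : α) :
    ∃ p, g p ≤ r ∧ dist x p = Metric.infDist x {z | g z ≤ r} := by
  obtain ⟨p, hp, eq⟩ := (isClosed_le hg continuous_const).exists_infDist_eq_dist hne x
  exact ⟨p, hp, eq.symm⟩

variable {E : Type*} [NormedAddCommGroup E] [NormedSpace ℝ E] {g : E → ℝ}

theorem exists_strongDual_norm_le_of_sub_mul_dist_le (hg : ConvexOn ℝ Set.univ g)
    (hg_cont : Continuous g) {c : ℝ} (hc : 0 ≤ c) {p : E}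
    (hp : ∀ z, g p - c * dist z p ≤ g z) :
    ∃ φ : StrongDual ℝ E, ‖φ‖ ≤ c ∧ ∀ z, g p + φ (z - p) ≤ g z := by
  have cone_concave : ConcaveOn ℝ Set.univ fun z => g p - c * dist z p :=
    (concaveOn_const (g p) convex_univ).sub ((convexOn_univ_dist p).smul hc)
  obtain ⟨φ, b, hφ⟩ := exists_strongDual_between hg hg_cont cone_concave hp
  have φ_p : φ p + b = g p :=
    le_antisymm (hφ p).2 (by simpa using (hφ p).1)
  have neg_le (v : E) : -(c * ‖v‖) ≤ φ v := by
    have le := (hφ (p + v)).1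
    rw [dist_self_add_left, map_add] at le
    linarith
  refine ⟨φ, φ.opNorm_le_bound hc fun v => abs_le.2 ⟨neg_le v, ?_⟩, fun z => ?_⟩
  · have le := neg_le (-v)
    rw [norm_neg, map_neg] at le
    exact neg_le_neg_iff.1 le
  · rw [map_sub]
    linarith [(hφ z).2]

theorem add_fderiv_le_of_convexOn {f : E → ℝ} {S : Set E} (hf : ConvexOn ℝ S f)
    {f' : StrongDual ℝ E} {x z : E} (hx : x ∈ S) (hz : z ∈ S) (hf' : HasFDerivAt f f' x) :
    f x + f' (z - x) ≤ f z := by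
  have deriv_line : HasDerivAt (f ∘ AffineMap.lineMap x z) (f' (z - x)) (0 : ℝ) :=
    HasFDerivAt.comp_hasDerivAt 0 (by simpa using hf') AffineMap.hasDerivAt_lineMap
  have le_slope := (hf.comp_affineMap (AffineMap.lineMap x z)).le_slope_of_hasDerivAt
    (x := 0) (y := 1) (by simpa) (by simpa) zero_lt_one deriv_line
  simp only [slope_def_field, Function.comp_apply, AffineMap.lineMap_apply_one,
    AffineMap.lineMap_apply_zero, sub_zero, div_one] at le_slope
  linarith

-- The point of the segment from `x` to `z` at which the chord of `g` has height `r` lies in the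
-- sublevel set.
theorem sub_mul_infDist_sublevel_le (hg : ConvexOn ℝ Set.univ g) {r : ℝ} {x z : E}
    (hz : g z ≤ r) (hx : r ≤ g x) :
    (g x - g z) * Metric.infDist x {w | g w ≤ r} ≤ (g x - r) * dist x z := by
  rcases (hz.trans hx).eq_or_lt with eq | lt
  · have hrx : g x - r = 0 := by linarith
    simp [hrx, eq]
  set θ : ℝ := (g x - r) / (g x - g z)
  have gap_pos : 0 < g x - g z := sub_pos.2 lt
  have θ_mul : θ * (g x - g z) = g x - r := div_mul_cancel₀ _ gap_pos.ne'
  have θ_nonneg : 0 ≤ θ := div_nonneg (sub_nonneg.2 hx) gap_pos.le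
  have θ_le_one : θ ≤ 1 := (div_le_one gap_pos).2 (by linarith)
  have mem : g (AffineMap.lineMap x z θ) ≤ r := by
    rw [AffineMap.lineMap_apply_module]
    refine (hg.2 (Set.mem_univ x) (Set.mem_univ z) (sub_nonneg.2 θ_le_one) θ_nonneg
      (sub_add_cancel 1 θ)).trans (le_of_eq ?_)
    simp only [smul_eq_mul]
    linarith
  calc (g x - g z) * Metric.infDist x {w | g w ≤ r}
      ≤ (g x - g z) * dist x (AffineMap.lineMap x z θ) := by
        gcongr
        exact Metric.infDist_le_dist_of_mem mem
    _ = (g x - r) * dist x z := by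
        rw [dist_left_lineMap, Real.norm_of_nonneg θ_nonneg, ← θ_mul]
        ring

theorem sub_mul_dist_le_of_dist_eq_infDist_sublevel (hg : ConvexOn ℝ Set.univ g) {r : ℝ} {x p : E}
    (hx : r < g x) (hp : dist x p = Metric.infDist x {w | g w ≤ r}) (hxp : 0 < dist x p) (z : E) :
    r - (g x - r) / dist x p * dist z p ≤ g z := by
  rcases le_total r (g z) with hz | hz
  · have : 0 ≤ (g x - r) / dist x p * dist z p := by
      have := sub_pos.2 hx
      positivity
    linarith
  · have chord := sub_mul_infDist_sublevel_le hg hz hx.le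
    have triangle : (g x - r) * dist x z ≤ (g x - r) * (dist x p + dist z p) :=
      mul_le_mul_of_nonneg_left (dist_triangle_right x z p) (sub_nonneg.2 hx.le)
    rw [← hp] at chord
    rw [sub_le_comm, div_mul_eq_mul_div, le_div_iff₀ hxp]
    linarith

end ConvexFunctions

section HalfspaceProjection

variable {E : Type*} [NormedAddCommGroup E] [InnerProductSpace ℝ E]

theorem norm_sub_sq_add_norm_sub_sq_le_of_inner_nonpos {v p w : E} (h : ⟪v - p, w - p⟫ ≤ 0) :
    ‖v - p‖ ^ 2 + ‖p - w‖ ^ 2 ≤ ‖v - w‖ ^ 2 := by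
  rw [← sub_sub_sub_cancel_right v w p, norm_sub_sq_real (v - p) (w - p), norm_sub_rev p w]
  linarith

theorem norm_sub_le_of_inner_nonpos {v p w : E} (h : ⟪v - p, w - p⟫ ≤ 0) :
    ‖p - w‖ ≤ ‖v - w‖ :=
  le_of_sq_le_sq ((le_add_of_nonneg_left (sq_nonneg _)).trans
    (norm_sub_sq_add_norm_sub_sq_le_of_inner_nonpos h)) (norm_nonneg _)

theorem norm_sub_le_of_inner_nonpos_of_inner_nonpos {v p w q : E} (hp : ⟪v - p, q - p⟫ ≤ 0)
    (hq : ⟪w - q, p - q⟫ ≤ 0) : ‖p - q‖ ≤ ‖v - w‖ := by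
  have monotone : ‖p - q‖ ^ 2 ≤ ⟪v - w, p - q⟫ := by
    have decomp : v - w = (v - p) - (w - q) + (p - q) := by abel
    rw [← neg_sub p q, inner_neg_right] at hp
    rw [decomp, inner_add_left, inner_sub_left, real_inner_self_eq_norm_sq]
    linarith
  nlinarith [real_inner_le_norm (v - w) (p - q), norm_nonneg (p - q), norm_nonneg (v - w)]

theorem norm_sub_le_sqrt_mul_of_inner_nonpos {v p w : E} (h : ⟪v - p, w - p⟫ ≤ 0) {σ G : ℝ}
    (hσ : 0 ≤ σ) (hG : 0 < G) (hvw : σ * ‖v - w‖ ≤ G * ‖v - p‖) :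
    ‖p - w‖ ≤ √(1 - σ ^ 2 / G ^ 2) * ‖v - w‖ := by
  have step_large : σ ^ 2 / G ^ 2 * ‖v - w‖ ^ 2 ≤ ‖v - p‖ ^ 2 := by
    rw [div_mul_eq_mul_div, div_le_iff₀ (by positivity), ← mul_pow, ← mul_pow, mul_comm _ G]
    gcongr
  rw [← Real.sqrt_sq (norm_nonneg (v - w)), ← Real.sqrt_mul' _ (sq_nonneg _)]
  apply Real.le_sqrt_of_sq_le
  linarith [norm_sub_sq_add_norm_sub_sq_le_of_inner_nonpos h]

/-- The metric projection of `y` onto the half-space `{z | ⟪s, z⟫ ≤ b}`. For `s = 0` it is the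
identity, since division by `‖0‖ ^ 2` gives `0`. -/
noncomputable def halfspaceProj (s : E) (b : ℝ) (y : E) : E :=
  y - (max (⟪s, y⟫ - b) 0 / ‖s‖ ^ 2) • s

variable {s w : E} {b : ℝ}

theorem inner_halfspaceProj (hw : ⟪s, w⟫ ≤ b) (y : E) :
    ⟪s, halfspaceProj s b y⟫ = min ⟪s, y⟫ b := by
  rcases eq_or_ne s 0 with rfl | hs
  · simpa using hw
  · have : ‖s‖ ^ 2 ≠ 0 := by positivity
    rw [halfspaceProj, inner_sub_right, inner_smul_right, real_inner_self_eq_norm_sq,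
      div_mul_cancel₀ _ this]
    grind

theorem inner_sub_halfspaceProj_nonpos (hw : ⟪s, w⟫ ≤ b) (y : E) :
    ⟪y - halfspaceProj s b y, w - halfspaceProj s b y⟫ ≤ 0 := by
  have displacement : y - halfspaceProj s b y = (max (⟪s, y⟫ - b) 0 / ‖s‖ ^ 2) • s :=
    sub_sub_cancel _ _
  rw [displacement, real_inner_smul_left, inner_sub_right, inner_halfspaceProj hw]
  rcases le_total ⟪s, y⟫ b with hy | hy
  · simp [hy]
  · rw [min_eq_right hy]
    exact mul_nonpos_of_nonneg_of_nonpos (by positivity) (sub_nonpos.2 hw)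

theorem norm_halfspaceProj_sub_le (hw : ⟪s, w⟫ ≤ b) (y : E) :
    ‖halfspaceProj s b y - w‖ ≤ ‖y - w‖ :=
  norm_sub_le_of_inner_nonpos (inner_sub_halfspaceProj_nonpos hw y)

theorem norm_halfspaceProj_sub_halfspaceProj_le (hw : ⟪s, w⟫ ≤ b) (y z : E) :
    ‖halfspaceProj s b y - halfspaceProj s b z‖ ≤ ‖y - z‖ := by
  have mem (y : E) : ⟪s, halfspaceProj s b y⟫ ≤ b :=
    (inner_halfspaceProj hw y).trans_le (min_le_right _ _)
  exact norm_sub_le_of_inner_nonpos_of_inner_nonpos (inner_sub_halfspaceProj_nonpos (mem z) y)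
    (inner_sub_halfspaceProj_nonpos (mem y) z)

theorem inner_sub_le_mul_norm_sub_halfspaceProj (hw : ⟪s, w⟫ ≤ b) {G : ℝ} (hs : ‖s‖ ≤ G) (y : E) :
    ⟪s, y⟫ - b ≤ G * ‖y - halfspaceProj s b y‖ := by
  calc ⟪s, y⟫ - b ≤ ⟪s, y - halfspaceProj s b y⟫ := by
        rw [inner_sub_right, inner_halfspaceProj hw]
        gcongr
        exact min_le_right _ _
    _ ≤ ‖s‖ * ‖y - halfspaceProj s b y‖ := real_inner_le_norm _ _
    _ ≤ G * ‖y - halfspaceProj s b y‖ := by gcongr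

theorem norm_halfspaceProj_sub_le_sqrt_mul (hw : ⟪s, w⟫ ≤ b) {σ G : ℝ} (hσ : 0 ≤ σ) (hG : 0 < G)
    (hs : ‖s‖ ≤ G) {x : E} (hxw : σ * ‖x - w‖ ≤ max (⟪s, x⟫ - b) 0) :
    ‖halfspaceProj s b x - w‖ ≤ √(1 - σ ^ 2 / G ^ 2) * ‖x - w‖ :=
  norm_sub_le_sqrt_mul_of_inner_nonpos (inner_sub_halfspaceProj_nonpos hw x) hσ hG <|
    hxw.trans (max_le (inner_sub_le_mul_norm_sub_halfspaceProj hw hs x) (by positivity))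

end HalfspaceProjection

section Regret

variable {E : Type*} [NormedAddCommGroup E] [InnerProductSpace ℝ E]

theorem inner_le_of_norm_sub_le_norm_gradient_step {x x' v w : E} {η : ℝ} (hη : 0 < η)
    (h : ‖x' - w‖ ≤ ‖x - η • v - w‖) :
    ⟪v, x - w⟫ ≤ ‖x - w‖ ^ 2 / (2 * η) - ‖x' - w‖ ^ 2 / (2 * η) + η * ‖v‖ ^ 2 / 2 := by
  have expand : ‖x' - w‖ ^ 2 ≤ ‖x - w‖ ^ 2 - 2 * η * ⟪v, x - w⟫ + η ^ 2 * ‖v‖ ^ 2 := by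
    calc ‖x' - w‖ ^ 2 ≤ ‖x - w - η • v‖ ^ 2 := by
          rw [sub_right_comm]
          gcongr
      _ = ‖x - w‖ ^ 2 - 2 * η * ⟪v, x - w⟫ + η ^ 2 * ‖v‖ ^ 2 := by
          rw [norm_sub_sq_real, real_inner_smul_right, real_inner_comm, norm_smul, mul_pow,
            Real.norm_eq_abs, sq_abs]
          ring
  rw [← sub_div, div_add_div _ _ (by positivity) two_ne_zero, le_div_iff₀ (by positivity)]
  linarith

theorem sum_inner_le_of_norm_sub_le_norm_gradient_step {x v : ℕ → E} {w : E} {η G : ℝ} {T : ℕ}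
    (hη : 0 < η) (hv : ∀ t ∈ Finset.Icc 1 T, ‖v t‖ ≤ G)
    (hstep : ∀ t ∈ Finset.Icc 1 T, ‖x (t + 1) - w‖ ≤ ‖x t - η • v t - w‖) :
    ∑ t ∈ Finset.Icc 1 T, ⟪v t, x t - w⟫ ≤ ‖x 1 - w‖ ^ 2 / (2 * η) + T * (η * G ^ 2 / 2) := by
  set Φ : ℕ → ℝ := fun t => ‖x t - w‖ ^ 2 / (2 * η)
  calc ∑ t ∈ Finset.Icc 1 T, ⟪v t, x t - w⟫
      ≤ ∑ t ∈ Finset.Icc 1 T, (Φ t - Φ (t + 1) + η * G ^ 2 / 2) := by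
        refine Finset.sum_le_sum fun t ht =>
          (inner_le_of_norm_sub_le_norm_gradient_step hη (hstep t ht)).trans ?_
        have := hv t ht
        gcongr
    _ = Φ 1 - Φ (T + 1) + T * (η * G ^ 2 / 2) := by
        rw [Finset.sum_add_distrib, ← Finset.Ico_add_one_right_eq_Icc,
          ← neg_sub (Φ (T + 1)), ← Finset.sum_Ico_sub Φ (by lia), ← Finset.sum_neg_distrib]
        simp
    _ ≤ ‖x 1 - w‖ ^ 2 / (2 * η) + T * (η * G ^ 2 / 2) := by
        have : 0 ≤ Φ (T + 1) := by positivity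
        linarith

theorem norm_sub_smul_sub_self_le {x v : E} {D G τ : ℝ} (hD : 0 ≤ D) (hG : 0 < G) (hτ : 0 ≤ τ)
    (hv : ‖v‖ ≤ G) : ‖x - (D / (G * τ)) • v - x‖ ≤ D / τ := by
  rw [sub_sub_cancel_left, norm_neg, norm_smul, Real.norm_of_nonneg (by positivity)]
  calc D / (G * τ) * ‖v‖ ≤ D / (G * τ) * G := by gcongr
    _ = D / τ := by field_simp

theorem sum_inner_le_mul_sqrt {x v : ℕ → E} {w : E} {D G : ℝ} {T : ℕ} (hT : 1 ≤ T) (hD : 0 < D)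
    (hG : 0 < G) (hx : ‖x 1 - w‖ ≤ D) (hv : ∀ t ∈ Finset.Icc 1 T, ‖v t‖ ≤ G)
    (hstep : ∀ t ∈ Finset.Icc 1 T,
      ‖x (t + 1) - w‖ ≤ ‖x t - (D / (G * √T)) • v t - w‖) :
    ∑ t ∈ Finset.Icc 1 T, ⟪v t, x t - w⟫ ≤ D * G * √T := by
  have hη : 0 < D / (G * √T) :=
    div_pos hD (mul_pos hG (Real.sqrt_pos.2 (by exact_mod_cast hT)))
  calc ∑ t ∈ Finset.Icc 1 T, ⟪v t, x t - w⟫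
      ≤ ‖x 1 - w‖ ^ 2 / (2 * (D / (G * √T))) + T * (D / (G * √T) * G ^ 2 / 2) :=
        sum_inner_le_of_norm_sub_le_norm_gradient_step hη hv hstep
    _ ≤ D ^ 2 / (2 * (D / (G * √T))) + √T ^ 2 * (D / (G * √T) * G ^ 2 / 2) := by
        rw [Real.sq_sqrt T.cast_nonneg]
        gcongr
    _ = D * G * √T := by
        field_simp
        ring

end Regret

section Recursion

theorem le_pow_mul_add_div_of_le_mul_add {u : ℕ → ℝ} {q c : ℝ} {N : ℕ} (hq₀ : 0 ≤ q) (hq₁ : q < 1)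
    (hc : 0 ≤ c) (hu : ∀ n < N, u (n + 1) ≤ q * u n + c) :
    ∀ n ≤ N, u n ≤ q ^ n * u 0 + c / (1 - q) := by
  have gap_pos : 0 < 1 - q := sub_pos.2 hq₁
  intro n hn
  induction n with
  | zero =>
    have : 0 ≤ c / (1 - q) := by positivity
    simpa using this
  | succ n ih =>
    calc u (n + 1) ≤ q * u n + c := hu n hn
      _ ≤ q * (q ^ n * u 0 + c / (1 - q)) + c := by
        gcongr
        exact ih (Nat.le_of_succ_le hn)
      _ = q ^ (n + 1) * u 0 + c / (1 - q) := by
        field_simp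
        ring

theorem sqrt_one_sub_pow_le_exp (a : ℝ) (n : ℕ) : √(1 - a) ^ n ≤ Real.exp (-(a * n) / 2) := by
  have base : √(1 - a) ≤ Real.exp (-a / 2) := by
    rw [Real.exp_half]
    exact Real.sqrt_le_sqrt (Real.one_sub_le_exp_neg a)
  calc √(1 - a) ^ n ≤ Real.exp (-a / 2) ^ n := by gcongr
    _ = Real.exp (-(a * n) / 2) := by
      rw [← Real.exp_nat_mul]
      ring_nf

theorem le_mul_exp_add_div_of_le_sqrt_mul_add {u : ℕ → ℝ} {a c : ℝ} {N : ℕ} (ha : 0 < a)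
    (hc : 0 ≤ c) (hu₀ : 0 ≤ u 0) (hu : ∀ n < N, u (n + 1) ≤ √(1 - a) * u n + c) :
    ∀ n ≤ N, u n ≤ u 0 * Real.exp (-(a * n) / 2) + c / (1 - √(1 - a)) := by
  intro n hn
  have rate_lt_one : √(1 - a) < 1 := (Real.sqrt_lt' one_pos).2 (by linarith)
  calc u n ≤ √(1 - a) ^ n * u 0 + c / (1 - √(1 - a)) :=
        le_pow_mul_add_div_of_le_mul_add (Real.sqrt_nonneg _) rate_lt_one hc hu n hn
    _ ≤ u 0 * Real.exp (-(a * n) / 2) + c / (1 - √(1 - a)) := by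
        rw [mul_comm]
        gcongr
        exact sqrt_one_sub_pow_le_exp a n

end Recursion

section Subgradients

variable {d : ℕ} {g : EuclideanSpace ℝ (Fin d) → ℝ} {x s : EuclideanSpace ℝ (Fin d)}

theorem isSubgradAt_gradient (hg : ConvexOn ℝ Set.univ g) (hx : DifferentiableAt ℝ g x) :
    IsSubgradAt g x (gradient g x) := fun z => by
  rw [inner_gradient_left]
  exact add_fderiv_le_of_convexOn hg (Set.mem_univ x) (Set.mem_univ z) hx.hasFDerivAt

theorem sub_le_mul_infDist_sublevel_of_isSubgradAt (hs : IsSubgradAt g x s) {G : ℝ} (hG : 0 < G)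
    (hsG : ‖s‖ ≤ G) {r : ℝ} (hne : {z | g z ≤ r}.Nonempty) :
    g x - r ≤ G * Metric.infDist x {z | g z ≤ r} := by
  rw [← div_le_iff₀' hG, Metric.le_infDist hne]
  intro z hz
  rw [div_le_iff₀' hG]
  calc g x - r ≤ ⟪s, x - z⟫ := by
        have := hs z
        rw [← neg_sub x z, inner_neg_right] at this
        linarith [Set.mem_ofPred.1 hz]
    _ ≤ ‖s‖ * ‖x - z‖ := real_inner_le_norm _ _
    _ ≤ G * dist x z := by
        rw [dist_eq_norm]
        gcongr

theorem exists_isSubgradAt_norm_le (hg : ConvexOn ℝ Set.univ g) {c : ℝ} (hc : 0 ≤ c)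
    (hx : ∀ z, g x - c * dist z x ≤ g z) : ∃ s, IsSubgradAt g x s ∧ ‖s‖ ≤ c := by
  obtain ⟨φ, φ_le, hφ⟩ :=
    exists_strongDual_norm_le_of_sub_mul_dist_le hg hg.locallyLipschitz.continuous hc hx
  refine ⟨(InnerProductSpace.toDual ℝ _).symm φ, fun z => ?_, ?_⟩
  · rw [InnerProductSpace.toDual_symm_apply]
    exact hφ z
  · rwa [LinearIsometryEquiv.norm_map]

-- At the closest point `p` of the sublevel set, `g` dominates the cone of slope
-- `(g x - r) / dist x p`, hence has a subgradient at `p` of at most that norm.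
theorem mul_infDist_sublevel_le_sub (hg : ConvexOn ℝ Set.univ g) {r σ : ℝ}
    (hne : {z | g z ≤ r}.Nonempty) (hσ : ∀ z, g z = r → ∀ s, IsSubgradAt g z s → σ ≤ ‖s‖)
    (hx : r ≤ g x) :
    σ * Metric.infDist x {z | g z ≤ r} ≤ g x - r := by
  obtain ⟨p, hp, hxp⟩ := exists_dist_eq_infDist_sublevel hg.locallyLipschitz.continuous hne x
  rcases (dist_nonneg : 0 ≤ dist x p).eq_or_lt with dist_zero | dist_pos
  · rw [← hxp, ← dist_zero, mul_zero]
    exact sub_nonneg.2 hx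
  have hrx : r < g x := hx.lt_of_ne fun eq => dist_pos.ne' <| by
    rw [hxp]
    exact Metric.infDist_zero_of_mem eq.ge
  have cone_le := sub_mul_dist_le_of_dist_eq_infDist_sublevel hg hrx hxp dist_pos
  have gp_eq : g p = r := le_antisymm hp (by simpa using cone_le p)
  obtain ⟨s, hs, s_le⟩ := exists_isSubgradAt_norm_le (x := p) hg
    (div_nonneg (sub_nonneg.2 hx) dist_pos.le) (fun z => by rw [gp_eq]; exact cone_le z)
  rw [← hxp, ← le_div_iff₀ dist_pos]
  exact (hσ p gp_eq s hs).trans s_le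

theorem mul_infDist_sublevel_le_sub_of_lt (hg : ConvexOn ℝ Set.univ g) {r r' σ : ℝ} (hr : r' < r)
    (hne : {z | g z ≤ r'}.Nonempty) (hσ : ∀ z, g z = r' → ∀ s, IsSubgradAt g z s → σ ≤ ‖s‖)
    (hσ₀ : 0 ≤ σ) (hx : r ≤ g x) :
    σ * Metric.infDist x {z | g z ≤ r} ≤ g x - r := by
  obtain ⟨p, hp, hxp⟩ := exists_dist_eq_infDist_sublevel hg.locallyLipschitz.continuous hne x
  have gap_pos : 0 < g x - r' := by linarith
  refine le_of_mul_le_mul_left ?_ gap_pos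
  calc (g x - r') * (σ * Metric.infDist x {z | g z ≤ r})
      ≤ σ * ((g x - g p) * Metric.infDist x {z | g z ≤ r}) := by
        rw [mul_left_comm]
        gcongr
        exact Metric.infDist_nonneg
    _ ≤ σ * ((g x - r) * dist x p) :=
        mul_le_mul_of_nonneg_left (sub_mul_infDist_sublevel_le hg (hp.trans hr.le) hx) hσ₀
    _ = (g x - r) * (σ * Metric.infDist x {z | g z ≤ r'}) := by
        rw [hxp]
        ring
    _ ≤ (g x - r) * (g x - r') := by
        gcongr
        exact mul_infDist_sublevel_le_sub hg hne hσ (hr.le.trans hx)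
    _ = (g x - r') * (g x - r) := mul_comm _ _

theorem mul_infDist_sublevel_le_max (hg : ConvexOn ℝ Set.univ g) {ε σ : ℝ} (hε : 0 < ε)
    (hσ₀ : 0 ≤ σ) (hne : ∃ z, g z = -ε)
    (hσ : ∀ z, g z = -ε → ∀ s, IsSubgradAt g z s → σ ≤ ‖s‖) (x : EuclideanSpace ℝ (Fin d)) :
    σ * Metric.infDist x {z | g z ≤ 0} ≤ max (g x) 0 := by
  rcases le_total (g x) 0 with hx | hx
  · rw [Metric.infDist_zero_of_mem (s := {z | g z ≤ 0}) hx, mul_zero]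
    exact le_max_right _ _
  · have := mul_infDist_sublevel_le_sub_of_lt hg (neg_neg_of_pos hε)
      (hne.imp fun _ => le_of_eq) hσ hσ₀ hx
    rw [sub_zero] at this
    exact this.trans (le_max_left _ _)

theorem sum_sub_le_mul_sqrt_of_isSubgradAt {f : ℕ → EuclideanSpace ℝ (Fin d) → ℝ}
    {x v : ℕ → EuclideanSpace ℝ (Fin d)} {w : EuclideanSpace ℝ (Fin d)} {D G : ℝ} {T : ℕ}
    (hT : 1 ≤ T) (hD : 0 < D) (hG : 0 < G) (hx : ‖x 1 - w‖ ≤ D)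
    (hv : ∀ t ∈ Finset.Icc 1 T, IsSubgradAt (f t) (x t) (v t))
    (hvG : ∀ t ∈ Finset.Icc 1 T, ‖v t‖ ≤ G)
    (hstep : ∀ t ∈ Finset.Icc 1 T, ‖x (t + 1) - w‖ ≤ ‖x t - (D / (G * √T)) • v t - w‖) :
    ∑ t ∈ Finset.Icc 1 T, (f t (x t) - f t w) ≤ D * G * √T := by
  refine (Finset.sum_le_sum fun t ht => ?_).trans (sum_inner_le_mul_sqrt hT hD hG hx hvG hstep)
  have := hv t ht w
  rw [← neg_sub (x t) w, inner_neg_right] at this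
  linarith

end Subgradients

section PolyakStep

variable {d : ℕ} {g : EuclideanSpace ℝ (Fin d) → ℝ} {R : ℝ} {x s w : EuclideanSpace ℝ (Fin d)}

theorem norm_projBall_le (hR : 0 < R) (v : EuclideanSpace ℝ (Fin d)) : ‖projBall R v‖ ≤ R := by
  have max_pos : 0 < max R ‖v‖ := lt_max_of_lt_left hR
  rw [projBall, norm_smul, Real.norm_of_nonneg (by positivity), div_mul_eq_mul_div,
    div_le_iff₀ max_pos]
  gcongr
  exact le_max_right _ _

theorem inner_sub_projBall_nonpos (hR : 0 < R) (hw : ‖w‖ ≤ R) (v : EuclideanSpace ℝ (Fin d)) :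
    ⟪v - projBall R v, w - projBall R v⟫ ≤ 0 := by
  rcases le_total ‖v‖ R with hv | hv
  · simp [projBall, hv, hR.ne']
  have v_pos : 0 < ‖v‖ := hR.trans_le hv
  have inner_le : ⟪v, w⟫ ≤ R / ‖v‖ * ‖v‖ ^ 2 :=
    calc ⟪v, w⟫ ≤ ‖v‖ * ‖w‖ := real_inner_le_norm v w
      _ ≤ ‖v‖ * R := by gcongr
      _ = R / ‖v‖ * ‖v‖ ^ 2 := by field_simp
  have displacement : v - (R / ‖v‖) • v = (1 - R / ‖v‖) • v := by rw [sub_smul, one_smul]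
  rw [projBall, max_eq_right hv, displacement, real_inner_smul_left, inner_sub_right,
    real_inner_smul_right, real_inner_self_eq_norm_sq]
  exact mul_nonpos_of_nonneg_of_nonpos (sub_nonneg.2 ((div_le_one v_pos).2 hv))
    (sub_nonpos.2 inner_le)

theorem norm_projBall_sub_le (hR : 0 < R) (hw : ‖w‖ ≤ R) (v : EuclideanSpace ℝ (Fin d)) :
    ‖projBall R v - w‖ ≤ ‖v - w‖ :=
  norm_sub_le_of_inner_nonpos (inner_sub_projBall_nonpos hR hw v)

/-- The Polyak feasibility step of the algorithm (with `ρ = 0`): the point `y` is projected onto the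
half-space `{z | g x + ⟪s, z - x⟫ ≤ 0}`, written as `{z | ⟪s, z⟫ ≤ ⟪s, x⟫ - g x}`, and then onto the
ball of radius `R`. -/
noncomputable def polyakStep (g : EuclideanSpace ℝ (Fin d) → ℝ) (R : ℝ)
    (x s y : EuclideanSpace ℝ (Fin d)) : EuclideanSpace ℝ (Fin d) :=
  projBall R (halfspaceProj s (⟪s, x⟫ - g x) y)

theorem ite_eq_polyakStep (x s y : EuclideanSpace ℝ (Fin d)) :
    (if s ≠ 0 then projBall R (y - (max (g x + ⟪s, y - x⟫ + 0) 0 / ‖s‖ ^ 2) • s)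
      else projBall R y) = polyakStep g R x s y := by
  have linearization : g x + ⟪s, y - x⟫ + 0 = ⟪s, y⟫ - (⟪s, x⟫ - g x) := by
    rw [inner_sub_right]
    ring
  rw [linearization]
  split_ifs with hs
  · rfl
  · simp [polyakStep, halfspaceProj, not_not.1 hs]

theorem norm_polyakStep_le (hR : 0 < R) (x s y : EuclideanSpace ℝ (Fin d)) :
    ‖polyakStep g R x s y‖ ≤ R :=
  norm_projBall_le hR _

theorem inner_le_of_isSubgradAt (hs : IsSubgradAt g x s) (hw : g w ≤ 0) :
    ⟪s, w⟫ ≤ ⟪s, x⟫ - g x := by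
  have := hs w
  rw [inner_sub_right] at this
  linarith

theorem norm_polyakStep_sub_le (hR : 0 < R) (hs : IsSubgradAt g x s) (hw : g w ≤ 0)
    (hwR : ‖w‖ ≤ R) (y : EuclideanSpace ℝ (Fin d)) :
    ‖polyakStep g R x s y - w‖ ≤ ‖y - w‖ :=
  (norm_projBall_sub_le hR hwR _).trans
    (norm_halfspaceProj_sub_le (inner_le_of_isSubgradAt hs hw) y)

theorem infDist_polyakStep_le (hR : 0 < R) (hg : Continuous g) (hne : {z | g z ≤ 0}.Nonempty)
    (hX : ∀ z, g z ≤ 0 → ‖z‖ ≤ R) (hs : IsSubgradAt g x s) {σ G : ℝ} (hσ : 0 ≤ σ) (hG : 0 < G)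
    (hsG : ‖s‖ ≤ G) (hxX : σ * Metric.infDist x {z | g z ≤ 0} ≤ max (g x) 0)
    (y : EuclideanSpace ℝ (Fin d)) :
    Metric.infDist (polyakStep g R x s y) {z | g z ≤ 0} ≤
      √(1 - σ ^ 2 / G ^ 2) * Metric.infDist x {z | g z ≤ 0} + ‖y - x‖ := by
  obtain ⟨p, hp, hxp⟩ := exists_dist_eq_infDist_sublevel hg hne x
  have p_mem := inner_le_of_isSubgradAt hs hp
  set P := halfspaceProj s (⟪s, x⟫ - g x)
  rw [← hxp, dist_eq_norm] at hxX
  calc Metric.infDist (polyakStep g R x s y) {z | g z ≤ 0}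
      ≤ ‖polyakStep g R x s y - p‖ := by
        rw [← dist_eq_norm]
        exact Metric.infDist_le_dist_of_mem hp
    _ ≤ ‖P y - p‖ := norm_projBall_sub_le hR (hX p hp) _
    _ ≤ ‖P y - P x‖ + ‖P x - p‖ := norm_sub_le_norm_sub_add_norm_sub _ _ _
    _ ≤ ‖y - x‖ + √(1 - σ ^ 2 / G ^ 2) * ‖x - p‖ := by
        gcongr
        · exact norm_halfspaceProj_sub_halfspaceProj_le p_mem y x
        · exact norm_halfspaceProj_sub_le_sqrt_mul p_mem hσ hG hsG (by rwa [sub_sub_cancel])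
    _ = √(1 - σ ^ 2 / G ^ 2) * Metric.infDist x {z | g z ≤ 0} + ‖y - x‖ := by
        rw [← hxp, dist_eq_norm, add_comm]

section Iteration

variable {T : ℕ} {x y s : ℕ → EuclideanSpace ℝ (Fin d)}

theorem norm_le_of_eq_polyakStep (hR : 0 < R) (hx : ‖x 1‖ ≤ R)
    (hstep : ∀ t ∈ Finset.Icc 1 T, x (t + 1) = polyakStep g R (x t) (s t) (y t)) :
    ∀ t ∈ Finset.Icc 1 T, ‖x t‖ ≤ R := by
  intro t ht
  obtain ⟨ht₁, htT⟩ := Finset.mem_Icc.1 ht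
  induction t, ht₁ using Nat.le_induction with
  | base => exact hx
  | succ t ht₁ _ =>
    rw [hstep t (Finset.mem_Icc.2 ⟨ht₁, Nat.le_of_succ_le htT⟩)]
    exact norm_polyakStep_le hR _ _ _

theorem infDist_le_of_eq_polyakStep (hR : 0 < R) (hg : Continuous g)
    (hne : {z | g z ≤ 0}.Nonempty) (hX : ∀ z, g z ≤ 0 → ‖z‖ ≤ R) {σ G δ : ℝ} (hσ : 0 < σ)
    (hG : 0 < G) (hδ : 0 ≤ δ) (herr : ∀ z, σ * Metric.infDist z {z | g z ≤ 0} ≤ max (g z) 0)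
    (hs : ∀ t ∈ Finset.Icc 1 T, IsSubgradAt g (x t) (s t))
    (hsG : ∀ t ∈ Finset.Icc 1 T, ‖s t‖ ≤ G) (hyx : ∀ t ∈ Finset.Icc 1 T, ‖y t - x t‖ ≤ δ)
    (hstep : ∀ t ∈ Finset.Icc 1 T, x (t + 1) = polyakStep g R (x t) (s t) (y t)) :
    ∀ t ∈ Finset.Icc 1 T, Metric.infDist (x t) {z | g z ≤ 0} ≤
      Metric.infDist (x 1) {z | g z ≤ 0} * Real.exp (-(σ ^ 2 / G ^ 2 * (t - 1)) / 2) +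
        δ / (1 - √(1 - σ ^ 2 / G ^ 2)) := by
  intro t ht
  have bound := le_mul_exp_add_div_of_le_sqrt_mul_add (N := T - 1)
    (u := fun n => Metric.infDist (x (n + 1)) {z | g z ≤ 0}) (a := σ ^ 2 / G ^ 2)
    (by positivity) hδ Metric.infDist_nonneg (fun n hn => ?_) (t - 1) (by grind)
  · obtain ⟨ht₁, -⟩ := Finset.mem_Icc.1 ht
    simpa [Nat.sub_add_cancel ht₁, Nat.cast_sub ht₁] using bound
  · have hn' : n + 1 ∈ Finset.Icc 1 T := by grind
    rw [hstep _ hn']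
    exact (infDist_polyakStep_le hR hg hne hX (hs _ hn') hσ.le hG (hsG _ hn') (herr _) _).trans
      (by gcongr; exact hyx _ hn')

theorem apply_le_of_eq_polyakStep (hR : 0 < R) (hg : Continuous g)
    (hne : {z | g z ≤ 0}.Nonempty) (hX : ∀ z, g z ≤ 0 → ‖z‖ ≤ R) {σ G δ D : ℝ} (hσ : 0 < σ)
    (hG : 0 < G) (hδ : 0 ≤ δ) (herr : ∀ z, σ * Metric.infDist z {z | g z ≤ 0} ≤ max (g z) 0)
    (hD : Metric.infDist (x 1) {z | g z ≤ 0} ≤ D)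
    (hs : ∀ t ∈ Finset.Icc 1 T, IsSubgradAt g (x t) (s t))
    (hsG : ∀ t ∈ Finset.Icc 1 T, ‖s t‖ ≤ G) (hyx : ∀ t ∈ Finset.Icc 1 T, ‖y t - x t‖ ≤ δ)
    (hstep : ∀ t ∈ Finset.Icc 1 T, x (t + 1) = polyakStep g R (x t) (s t) (y t)) :
    ∀ t ∈ Finset.Icc 1 T, g (x t) ≤
      D * G * Real.exp (-(σ ^ 2 * (t - 1)) / (2 * G ^ 2)) +
        δ * G / (1 - √(1 - σ ^ 2 / G ^ 2)) := by
  intro t ht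
  have exponent : -(σ ^ 2 / G ^ 2 * (t - 1)) / 2 = -(σ ^ 2 * (t - 1)) / (2 * G ^ 2) := by
    field_simp
  calc g (x t) ≤ G * Metric.infDist (x t) {z | g z ≤ 0} := by
        simpa using sub_le_mul_infDist_sublevel_of_isSubgradAt (hs t ht) hG (hsG t ht) hne
    _ ≤ G * (Metric.infDist (x 1) {z | g z ≤ 0} * Real.exp (-(σ ^ 2 / G ^ 2 * (t - 1)) / 2) +
          δ / (1 - √(1 - σ ^ 2 / G ^ 2))) := by
        gcongr
        exact infDist_le_of_eq_polyakStep hR hg hne hX hσ hG hδ herr hs hsG hyx hstep t ht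
    _ ≤ G * (D * Real.exp (-(σ ^ 2 / G ^ 2 * (t - 1)) / 2) +
          δ / (1 - √(1 - σ ^ 2 / G ^ 2))) := by gcongr
    _ = D * G * Real.exp (-(σ ^ 2 * (t - 1)) / (2 * G ^ 2)) +
          δ * G / (1 - √(1 - σ ^ 2 / G ^ 2)) := by
        rw [exponent]
        ring

end Iteration

end PolyakStep

theorem stmt7 {d T : ℕ} (hT : 1 ≤ T)
    {R Gf Gg ε σ η ρ : ℝ}
    (g : EuclideanSpace ℝ (Fin d) → ℝ)
    (f : ℕ → EuclideanSpace ℝ (Fin d) → ℝ)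
    (x y s : ℕ → EuclideanSpace ℝ (Fin d))
    (hR : 0 < R) (hGf : 0 < Gf) (hGg : 0 < Gg)
    (hgconv : ConvexOn ℝ Set.univ g)
    (hA1 : {z : EuclideanSpace ℝ (Fin d) | g z ≤ 0} ⊆ Metric.closedBall 0 R)
    (hfconv : ∀ t ∈ Finset.Icc 1 T, ConvexOn ℝ Set.univ (f t))
    (hfdiff : ∀ t ∈ Finset.Icc 1 T, Differentiable ℝ (f t))
    (hA2 : ∀ t ∈ Finset.Icc 1 T, ∀ z ∈ Metric.closedBall (0 : EuclideanSpace ℝ (Fin d)) R,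
      ‖gradient (f t) z‖ ≤ Gf)
    (hA3 : ∀ z ∈ Metric.closedBall (0 : EuclideanSpace ℝ (Fin d)) R,
      ∀ sz, IsSubgradAt g z sz → ‖sz‖ ≤ Gg)
    (hσ : 0 < σ) (hε : 0 < ε) (hσGg : σ ≤ Gg)
    (hA4ne : ∃ z, g z = -ε)
    (hA4 : ∀ z : EuclideanSpace ℝ (Fin d), g z = -ε → ∀ sz, IsSubgradAt g z sz → σ ≤ ‖sz‖)
    (hx1 : x 1 ∈ Metric.closedBall (0 : EuclideanSpace ℝ (Fin d)) R)
    (hηdef : η = 2 * R / (Gf * Real.sqrt T))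
    (hρdef : ρ = 0)
    (hs : ∀ t ∈ Finset.Icc 1 T, IsSubgradAt g (x t) (s t))
    (hy : ∀ t ∈ Finset.Icc 1 T, y t = x t - η • gradient (f t) (x t))
    (hupd : ∀ t ∈ Finset.Icc 1 T,
      x (t + 1) = if s t ≠ 0 then
          projBall R (y t - ((max (g (x t) + ⟪s t, y t - x t⟫ + ρ) 0) / ‖s t‖ ^ 2) • s t)
        else projBall R (y t))
    :
    (∀ xstar : EuclideanSpace ℝ (Fin d), g xstar ≤ 0 →
      ∑ t ∈ Finset.Icc 1 T, (f t (x t) - f t xstar) ≤ 2 * R * Gf * Real.sqrt T) ∧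
    (∀ t ∈ Finset.Icc 1 T,
      g (x t) ≤ 2 * R * Gg * Real.exp (-(σ ^ 2 * ((t : ℝ) - 1)) / (2 * Gg ^ 2)) +
        2 * R * Gg / ((1 - Real.sqrt (1 - σ ^ 2 / Gg ^ 2)) * Real.sqrt T)) := by
  subst hηdef hρdef
  simp only [mem_closedBall_zero_iff] at hA2 hA3 hx1
  have hX : ∀ w, g w ≤ 0 → ‖w‖ ≤ R := fun w hw => mem_closedBall_zero_iff.1 (hA1 hw)
  obtain ⟨z, hz⟩ : {z | g z ≤ 0}.Nonempty := hA4ne.imp fun z hz => hz.trans_le (by linarith)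
  have hstep : ∀ t ∈ Finset.Icc 1 T, x (t + 1) = polyakStep g R (x t) (s t) (y t) :=
    fun t ht => (hupd t ht).trans (ite_eq_polyakStep _ _ _)
  have hball := norm_le_of_eq_polyakStep hR hx1 hstep
  have hgrad : ∀ t ∈ Finset.Icc 1 T, ‖gradient (f t) (x t)‖ ≤ Gf :=
    fun t ht => hA2 t ht _ (hball t ht)
  have hdiam : ∀ w, g w ≤ 0 → dist (x 1) w ≤ 2 * R := fun w hw =>
    (dist_le_norm_add_norm _ _).trans (by linarith [hX w hw])
  refine ⟨fun w hw => ?_, fun t ht => ?_⟩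
  · refine sum_sub_le_mul_sqrt_of_isSubgradAt hT (by positivity) hGf
      (dist_eq_norm (x 1) w ▸ hdiam w hw)
      (fun t ht => isSubgradAt_gradient (hfconv t ht) (hfdiff t ht _)) hgrad fun t ht => ?_
    rw [hstep t ht, ← hy t ht]
    exact norm_polyakStep_sub_le hR (hs t ht) hw (hX w hw) _
  · rw [mul_comm (1 - _) √(T : ℝ), ← div_div (2 * R * Gg), ← div_mul_eq_mul_div (2 * R)]
    refine apply_le_of_eq_polyakStep hR hgconv.locallyLipschitz.continuous ⟨z, hz⟩ hX hσ hGg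
      (by positivity) (mul_infDist_sublevel_le_max hgconv hε hσ.le hA4ne hA4)
      ((Metric.infDist_le_dist_of_mem hz).trans (hdiam z hz)) hs
      (fun t ht => hA3 _ (hball t ht) _ (hs t ht)) (fun t ht => ?_) hstep t ht
    rw [hy t ht]
    exact norm_sub_smul_sub_self_le (by positivity) hGf (Real.sqrt_nonneg _) (hgrad t ht)
end

section
/- (Error bound.) Under (A3) and (A4), for every ρ ∈ [0, ε] and every x ∈ RB: dist(x, X_ρ) ≤ (1/σ)·[g(x) + ρ]_+. -/
open scoped RealInnerProductSpace Classical

/-!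
Let `p` be the projection of `x` onto the sublevel set `{g ≤ -ε}`. Every point of the half-space
`{y | 0 ≤ ⟪x - p, y - p⟫}` has `g y ≥ -ε`, so Lagrange duality for the single constraint
`0 ≤ ⟪x - p, y - p⟫` yields `c ≥ 0` such that `c • (x - p)` is a subgradient of `g` at `p`, and
`g p = -ε`. Its norm is at least `σ`, so the subgradient inequality at `x` reads
`σ * ‖x - p‖ ≤ g x + ε`. Convexity on the segment from `p` to `x` transfers this bound from the
level `-ε` to the level `-ρ`.
-/

section Module

variable {E : Type*} [AddCommGroup E] [Module ℝ E] {s : Set E} {f g : E → ℝ} {x y z : E} {a : ℝ}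

theorem lineMap_mem_sublevel_of_convexOn (hg : ConvexOn ℝ s g) (hy : y ∈ s) (hx : x ∈ s)
    (hya : g y ≤ a) (hax : a < g x) :
    AffineMap.lineMap y x ((a - g y) / (g x - g y)) ∈ {z ∈ s | g z ≤ a} := by
  have hgap : 0 < g x - g y := by linarith
  set t := (a - g y) / (g x - g y)
  have ht_mul : t * (g x - g y) = a - g y := div_mul_cancel₀ _ hgap.ne'
  have ht_nonneg : 0 ≤ t := div_nonneg (by linarith) hgap.le
  have ht_le_one : t ≤ 1 := (div_le_one hgap).2 (by linarith)
  refine ⟨hg.1.lineMap_mem hy hx ⟨ht_nonneg, ht_le_one⟩, ?_⟩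
  calc g (AffineMap.lineMap y x t)
      = g ((1 - t) • y + t • x) := by rw [AffineMap.lineMap_apply_module]
    _ ≤ (1 - t) * g y + t * g x := hg.2 hy hx (sub_nonneg.2 ht_le_one) ht_nonneg (by ring)
    _ = a := by linear_combination ht_mul

theorem div_le_div_of_convexOn_of_concaveOn (hg : ConvexOn ℝ s g) (hf : ConcaveOn ℝ s f)
    (hfg : ∀ w ∈ s, 0 ≤ f w → 0 ≤ g w) (hy : y ∈ s) (hz : z ∈ s) (hfy : f y < 0) (hfz : 0 < f z) :
    g y / f y ≤ g z / f z := by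
  have hgap : 0 < f z - f y := by linarith
  set t := -f y / (f z - f y)
  have ht_mul : t * (f z - f y) = -f y := div_mul_cancel₀ _ hgap.ne'
  have ht_nonneg : 0 ≤ t := div_nonneg (by linarith) hgap.le
  have hone_sub_nonneg : 0 ≤ 1 - t := sub_nonneg.2 ((div_le_one hgap).2 (by linarith))
  have hf_nonneg : 0 ≤ f ((1 - t) • y + t • z) :=
    calc 0 = (1 - t) * f y + t * f z := by linear_combination -ht_mul
      _ ≤ _ := hf.2 hy hz hone_sub_nonneg ht_nonneg (by ring)
  have hg_nonneg : 0 ≤ (1 - t) * g y + t * g z :=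
    (hfg _ (hg.1 hy hz hone_sub_nonneg ht_nonneg (by ring)) hf_nonneg).trans
      (hg.2 hy hz hone_sub_nonneg ht_nonneg (by ring))
  have hcross : 0 ≤ f z * g y - f y * g z :=
    calc 0 ≤ (f z - f y) * ((1 - t) * g y + t * g z) := mul_nonneg hgap.le hg_nonneg
      _ = f z * g y - f y * g z := by linear_combination (g z - g y) * ht_mul
  rw [le_div_iff₀ hfz, div_mul_eq_mul_div, div_le_iff_of_neg hfy]
  linarith

theorem exists_lagrange_multiplier (hg : ConvexOn ℝ s g) (hf : ConcaveOn ℝ s f)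
    (hslater : ∃ w ∈ s, 0 < f w) (hfg : ∀ w ∈ s, 0 ≤ f w → 0 ≤ g w) :
    ∃ c : ℝ, 0 ≤ c ∧ ∀ w ∈ s, c * f w ≤ g w := by
  let ratio (w : E) : ℝ := g w / f w
  -- Dividing `c * f w ≤ g w` by `f w` bounds `c` from below if `f w < 0`, from above if `0 < f w`.
  obtain ⟨c, hc_lower, hc_upper⟩ :
      (upperBounds (insert 0 (ratio '' {w ∈ s | f w < 0})) ∩
        lowerBounds (ratio '' {w ∈ s | 0 < f w})).Nonempty := by
    apply exists_between_of_forall_le (Set.insert_nonempty _ _) (Set.Nonempty.image _ hslater)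
    rintro _ (rfl | ⟨y, ⟨hy, hfy⟩, rfl⟩) _ ⟨z, ⟨hz, hfz⟩, rfl⟩
    · exact div_nonneg (hfg z hz hfz.le) hfz.le
    · exact div_le_div_of_convexOn_of_concaveOn hg hf hfg hy hz hfy hfz
  refine ⟨c, hc_lower (Set.mem_insert _ _), fun w hw => ?_⟩
  rcases lt_trichotomy (f w) 0 with hneg | hzero | hpos
  · exact (div_le_iff_of_neg hneg).1
      (hc_lower (Set.mem_insert_of_mem _ (Set.mem_image_of_mem ratio ⟨hw, hneg⟩)))
  · simpa [hzero] using hfg w hw hzero.ge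
  · exact (le_div_iff₀ hpos).1 (hc_upper (Set.mem_image_of_mem ratio ⟨hw, hpos⟩))

end Module

theorem infDist_sublevel_le_of_convexOn {E : Type*} [SeminormedAddCommGroup E] [NormedSpace ℝ E]
    {s : Set E} {g : E → ℝ} {x y : E} {a : ℝ} (hg : ConvexOn ℝ s g) (hy : y ∈ s) (hx : x ∈ s)
    (hya : g y ≤ a) (hax : a < g x) :
    Metric.infDist x {z ∈ s | g z ≤ a} ≤ (g x - a) / (g x - g y) * dist x y := by
  have hgap : 0 < g x - g y := by linarith
  have hratio : 1 - (a - g y) / (g x - g y) = (g x - a) / (g x - g y) := by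
    field_simp
    ring
  calc Metric.infDist x {z ∈ s | g z ≤ a}
      ≤ dist x (AffineMap.lineMap y x ((a - g y) / (g x - g y))) :=
        Metric.infDist_le_dist_of_mem (lineMap_mem_sublevel_of_convexOn hg hy hx hya hax)
    _ = (g x - a) / (g x - g y) * dist x y := by
        rw [dist_right_lineMap, hratio, dist_comm y x,
          Real.norm_of_nonneg (div_nonneg (by linarith) hgap.le)]

section InnerProductSpace

variable {E : Type*} [NormedAddCommGroup E] [InnerProductSpace ℝ E] {g : E → ℝ} {x p : E}
  {a σ : ℝ}

/-- `s` is a subgradient of `g` at `x`. This is `IsSubgradAt` with the Euclidean space replaced by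
an arbitrary real inner product space; the two agree definitionally on Euclidean spaces. -/
def IsSubgradient (g : E → ℝ) (x s : E) : Prop :=
  ∀ y, g x + ⟪s, y - x⟫ ≤ g y

theorem concaveOn_inner_sub (u p : E) : ConcaveOn ℝ Set.univ fun y => ⟪u, y - p⟫ := by
  simp only [inner_sub_right]
  exact ((innerₛₗ ℝ u).concaveOn convex_univ).sub (convexOn_const _ convex_univ)

theorem le_apply_of_inner_sub_nonneg (hg : ConvexOn ℝ Set.univ g) (hpa : g p ≤ a)
    (hax : a < g x) (hproj : ∀ w, g w ≤ a → ⟪x - p, w - p⟫ ≤ 0) {y : E}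
    (hy : 0 ≤ ⟪x - p, y - p⟫) : a ≤ g y := by
  by_contra! hya
  have hxp : x - p ≠ 0 := sub_ne_zero.2 (by rintro rfl; linarith)
  have hgap : 0 < g x - g y := by linarith
  set t := (a - g y) / (g x - g y)
  have ht_pos : 0 < t := div_pos (by linarith) hgap
  have ht_le_one : t ≤ 1 := (div_le_one hgap).2 (by linarith)
  have hinner : 0 < ⟪x - p, AffineMap.lineMap y x t - p⟫ :=
    calc 0 < (1 - t) * ⟪x - p, y - p⟫ + t * ⟪x - p, x - p⟫ :=
          add_pos_of_nonneg_of_pos (mul_nonneg (sub_nonneg.2 ht_le_one) hy)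
            (mul_pos ht_pos (real_inner_self_pos.2 hxp))
      _ = ⟪x - p, AffineMap.lineMap y x t - p⟫ := by
          rw [← real_inner_smul_right, ← real_inner_smul_right, ← inner_add_right,
            AffineMap.lineMap_apply_module]
          congr 1
          module
  exact hinner.not_ge <| hproj _
    (lineMap_mem_sublevel_of_convexOn hg (Set.mem_univ y) (Set.mem_univ x) hya.le hax).2

theorem exists_isSubgradient_smul_sub (hg : ConvexOn ℝ Set.univ g) (hpa : g p = a)
    (hax : a < g x) (hproj : ∀ w, g w ≤ a → ⟪x - p, w - p⟫ ≤ 0) :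
    ∃ c : ℝ, 0 ≤ c ∧ IsSubgradient g p (c • (x - p)) := by
  have hxp : x - p ≠ 0 := sub_ne_zero.2 (by rintro rfl; linarith)
  obtain ⟨c, hc_nonneg, hc⟩ := exists_lagrange_multiplier
    (hg.sub (concaveOn_const a convex_univ)) (concaveOn_inner_sub (x - p) p)
    ⟨x, Set.mem_univ x, real_inner_self_pos.2 hxp⟩
    fun y _ hy => sub_nonneg.2 (le_apply_of_inner_sub_nonneg hg hpa.le hax hproj hy)
  refine ⟨c, hc_nonneg, fun y => ?_⟩
  rw [real_inner_smul_left, hpa]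
  exact le_sub_iff_add_le'.1 (hc y (Set.mem_univ y))

theorem mul_norm_sub_le_of_isSubgradient_smul_sub {c : ℝ} (hc : 0 ≤ c)
    (hsub : IsSubgradient g p (c • (x - p))) (hσ : σ ≤ ‖c • (x - p)‖) :
    σ * ‖x - p‖ ≤ g x - g p :=
  calc σ * ‖x - p‖ ≤ ‖c • (x - p)‖ * ‖x - p‖ := by gcongr
    _ = ⟪c • (x - p), x - p⟫ := by
        rw [norm_smul, Real.norm_of_nonneg hc, real_inner_smul_left,
          real_inner_self_eq_norm_mul_norm, mul_assoc]
    _ ≤ g x - g p := le_sub_iff_add_le'.2 (hsub x)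

theorem exists_level_point_mul_norm_sub_le [CompleteSpace E] (hg : ConvexOn ℝ Set.univ g)
    (hlsc : LowerSemicontinuous g) (hne : ∃ z, g z ≤ a)
    (hσ : ∀ z, g z = a → ∀ v, IsSubgradient g z v → σ ≤ ‖v‖) (hax : a < g x) :
    ∃ p, g p = a ∧ σ * ‖x - p‖ ≤ g x - g p := by
  have hconvex : Convex ℝ {w | g w ≤ a} := by simpa using hg.convex_le a
  have hcomplete : IsComplete {w | g w ≤ a} := (hlsc.isClosed_preimage a).isComplete
  obtain ⟨p, hpa, hp⟩ := exists_norm_eq_iInf_of_complete_convex hne hcomplete hconvex x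
  have hproj := (norm_eq_iInf_iff_real_inner_le_zero hconvex hpa).1 hp
  have hp_level : g p = a :=
    le_antisymm hpa (le_apply_of_inner_sub_nonneg hg hpa hax hproj (by simp))
  obtain ⟨c, hc, hsub⟩ := exists_isSubgradient_smul_sub hg hp_level hax hproj
  exact ⟨p, hp_level,
    mul_norm_sub_le_of_isSubgradient_smul_sub hc hsub (hσ p hp_level _ hsub)⟩

theorem stmt8_general [CompleteSpace E] {ε ρ : ℝ} (hg : ConvexOn ℝ Set.univ g)
    (hlsc : LowerSemicontinuous g) (hσ : 0 < σ) (hne : ∃ z, g z ≤ -ε)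
    (hσ_le : ∀ z, g z = -ε → ∀ v, IsSubgradient g z v → σ ≤ ‖v‖) (hρε : ρ ≤ ε) (x : E) :
    Metric.infDist x {z | g z ≤ -ρ} ≤ 1 / σ * max (g x + ρ) 0 := by
  rcases le_or_gt (g x) (-ρ) with hx | hx
  · have hmem : x ∈ {z | g z ≤ -ρ} := hx
    rw [Metric.infDist_zero_of_mem hmem]
    positivity
  obtain ⟨p, hp, hdist⟩ :=
    exists_level_point_mul_norm_sub_le hg hlsc hne hσ_le ((neg_le_neg hρε).trans_lt hx)
  have hgap : 0 < g x - g p := by linarith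
  have hexcess : 0 < g x + ρ := by linarith
  calc Metric.infDist x {z | g z ≤ -ρ}
      ≤ (g x - -ρ) / (g x - g p) * dist x p := by
        simpa using infDist_sublevel_le_of_convexOn hg (Set.mem_univ p) (Set.mem_univ x)
          (hp.trans_le (neg_le_neg hρε)) hx
    _ ≤ (g x - -ρ) / (g x - g p) * ((g x - g p) / σ) := by
        rw [sub_neg_eq_add, dist_eq_norm]
        gcongr
        exact (le_div_iff₀' hσ).2 hdist
    _ = 1 / σ * max (g x + ρ) 0 := by
        rw [max_eq_left hexcess.le]
        field_simp
        ring

end InnerProductSpace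

theorem stmt8 {d : ℕ} {R Gg ε σ : ℝ}
    (g : EuclideanSpace ℝ (Fin d) → ℝ)
    (hR : 0 < R) (hGg : 0 < Gg)
    (hgconv : ConvexOn ℝ Set.univ g)
    (hA3 : ∀ z ∈ Metric.closedBall (0 : EuclideanSpace ℝ (Fin d)) R,
      ∀ sz, IsSubgradAt g z sz → ‖sz‖ ≤ Gg)
    (hσ : 0 < σ) (hε : 0 < ε) (hσGg : σ ≤ Gg)
    (hA4ne : ∃ z, g z = -ε)
    (hA4 : ∀ z : EuclideanSpace ℝ (Fin d), g z = -ε → ∀ sz, IsSubgradAt g z sz → σ ≤ ‖sz‖) :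
    ∀ ρ : ℝ, 0 ≤ ρ → ρ ≤ ε →
      ∀ x ∈ Metric.closedBall (0 : EuclideanSpace ℝ (Fin d)) R,
        Metric.infDist x {z : EuclideanSpace ℝ (Fin d) | g z ≤ -ρ} ≤ 1 / σ * max (g x + ρ) 0 :=
  fun _ _ hρε x _ => stmt8_general hgconv
    (continuousOn_univ.1 (hgconv.continuousOn isOpen_univ)).lowerSemicontinuous hσ
    (hA4ne.imp fun _ => le_of_eq) hA4 hρε x
end
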